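/- (Kazhikhov-type representation formula.) Let (v, u, θ) be a smooth solution of the Navier-Stokes system with constant viscosity μ̃. Then for each integer k and each x ∈ [k, k+1], v(x,t) = B(x,t)Y(t) + (R/μ̃) ∫₀^t (B(x,t)Y(t))/(B(x,s)Y(s)) · θ(x,s) ds, where B(x,t) = v₀(x) exp((1/μ̃) ∫_x^{+∞} (u₀(y) − u(y,t)) D(y) dy), Y(t) = exp((1/μ̃) ∫₀^t ∫_{k+1}^{k+2} σ(y,s) dy ds), σ = μ̃ u_x/v − Rθ/v, and D(x) = 1 for x ≤ k+1, D(x) = k+2−x for k+1 ≤ x ≤ k+2, D(x) = 0 for x ≥ k+2. -/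

import Mathlib

/-!
The momentum equation is `u_t = σ_x`. Testing it against the cut-off `D` on `[x, ∞)` and
integrating over `[0, t]` gives
`∫_x^∞ (u₀ - u(·, t)) D = ∫₀ᵗ σ(x, s) ds - ∫₀ᵗ ∫_{k+1}^{k+2} σ`,
that is, `B(x, t) Y(t) = v₀(x) exp((1/μ) ∫₀ᵗ σ(x, s) ds)`. Since `u_x = (σ v + R θ) / μ`, the mass
equation is the linear ordinary differential equation `v_t = (σ/μ) v + (R/μ) θ` in time, and the
representation formula is its variation of constants formula.
-/

noncomputable section
open MeasureTheory Real Filter Topology Set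

/-- Spatial partial derivative of a function `f(x,t)`. -/
def pdx (f : ℝ → ℝ → ℝ) (x t : ℝ) : ℝ := deriv (fun y => f y t) x

/-- Temporal partial derivative of a function `f(x,t)`. -/
def pdt (f : ℝ → ℝ → ℝ) (x t : ℝ) : ℝ := deriv (fun s => f x s) t

/-- The 1-D compressible Navier–Stokes system in Lagrangian coordinates with
constant viscosity `μ` and heat conductivity `κ θ^β`, for all `t > 0`. -/
def NSAll (μ κ R cν β : ℝ) (v u θ : ℝ → ℝ → ℝ) : Prop :=
  ∀ x t : ℝ, 0 < t →
    pdt v x t = pdx u x t ∧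
    pdt u x t + pdx (fun y s => R * θ y s / v y s) x t
      = μ * pdx (fun y s => pdx u y s / v y s) x t ∧
    pdt (fun y s => cν * θ y s + u y s ^ 2 / 2) x t
        + pdx (fun y s => R * θ y s / v y s * u y s) x t
      = pdx (fun y s => κ * θ y s ^ β * pdx θ y s / v y s
          + μ * u y s * pdx u y s / v y s) x t

/-- The cut-off function `D` adapted to the unit interval `[k, k+1]`. -/
def Dcut (k : ℤ) (x : ℝ) : ℝ :=
  if x ≤ (k : ℝ) + 1 then 1 else if x ≤ (k : ℝ) + 2 then (k : ℝ) + 2 - x else 0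

/-- `σ = μ u_x / v - R θ / v`. -/
def sigmaNS (μ R : ℝ) (v u θ : ℝ → ℝ → ℝ) (y s : ℝ) : ℝ :=
  μ * pdx u y s / v y s - R * θ y s / v y s

/-- `B(x,t) = v₀(x) exp((1/μ) ∫_x^{∞} (u₀(y) - u(y,t)) D(y) dy)`. -/
def Bfun (μ : ℝ) (v u : ℝ → ℝ → ℝ) (k : ℤ) (x t : ℝ) : ℝ :=
  v x 0 * Real.exp ((1 / μ) * ∫ y in Ioi x, (u y 0 - u y t) * Dcut k y)

/-- `Y(t) = exp((1/μ) ∫₀^t ∫_{k+1}^{k+2} σ(y,s) dy ds)`. -/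
def Yfun (μ R : ℝ) (v u θ : ℝ → ℝ → ℝ) (k : ℤ) (t : ℝ) : ℝ :=
  Real.exp ((1 / μ) *
    ∫ s in (0 : ℝ)..t, ∫ y in ((k : ℝ) + 1)..((k : ℝ) + 2), sigmaNS μ R v u θ y s)

open Function (uncurry)

section LinearODE

variable {E : Type*} [NormedAddCommGroup E] [NormedSpace ℝ E] [CompleteSpace E]

lemma hasDerivAt_integral_left_of_continuousOn_Icc {f : ℝ → E} {a b s : ℝ}
    (hf : ContinuousOn f (Icc a b)) (hs : s ∈ Ioo a b) :
    HasDerivAt (fun r => ∫ x in r..b, f x) (-f s) s :=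
  intervalIntegral.integral_hasDerivAt_left
    ((hf.mono (Icc_subset_Icc_left hs.1.le)).intervalIntegrable_of_Icc hs.2.le)
    ((hf.mono Ioo_subset_Icc_self).stronglyMeasurableAtFilter isOpen_Ioo s hs)
    (hf.continuousAt (Icc_mem_nhds hs.1 hs.2))

theorem variation_of_constants {a : ℝ → ℝ} {b f : ℝ → E} {t₀ t : ℝ} (ht : t₀ ≤ t)
    (ha : ContinuousOn a (Icc t₀ t)) (hb : ContinuousOn b (Icc t₀ t))
    (hf : ContinuousOn f (Icc t₀ t))
    (hf' : ∀ s ∈ Ioo t₀ t, HasDerivAt f (a s • f s + b s) s) :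
    f t = exp (∫ r in t₀..t, a r) • f t₀ + ∫ s in t₀..t, exp (∫ r in s..t, a r) • b s := by
  have hΦ : ContinuousOn (fun s => exp (∫ r in s..t, a r)) (Icc t₀ t) := by
    have hprim : ContinuousOn (fun s => ∫ r in s..t, a r) (uIcc t₀ t) := by
      rw [← uIcc_of_le ht] at ha
      exact intervalIntegral.continuousOn_primitive_interval_left ha.integrableOn_uIcc
    rw [uIcc_of_le ht] at hprim
    exact hprim.rexp
  have hΦf : ∀ s ∈ Ioo t₀ t, HasDerivAt (fun s => exp (∫ r in s..t, a r) • f s)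
      (exp (∫ r in s..t, a r) • b s) s := fun s hs => by
    refine ((hasDerivAt_integral_left_of_continuousOn_Icc ha hs).exp.smul (hf' s hs)).congr_deriv ?_
    module
  have hFTC := intervalIntegral.integral_eq_sub_of_hasDerivAt_of_le ht (hΦ.smul hf) hΦf
    ((hΦ.smul hb).intervalIntegrable_of_Icc ht)
  simp [hFTC]

end LinearODE

lemma continuousOn_intervalIntegral_of_uncurry {X E : Type*} [TopologicalSpace X]
    [FirstCountableTopology X] [NormedAddCommGroup E] [NormedSpace ℝ E] {f : ℝ → X → E} {T : Set X}
    (hf : ContinuousOn (uncurry f) (univ ×ˢ T)) (a b : ℝ) :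
    ContinuousOn (fun s => ∫ y in a..b, f y s) T := by
  rw [continuousOn_iff_continuous_domRestrict]
  exact intervalIntegral.continuous_parametric_intervalIntegral_of_continuous'
    (f := fun (s : T) y => f y s)
    (hf.comp_continuous (f := fun p : T × ℝ => (p.2, (p.1 : X))) (by fun_prop)
      fun p => ⟨mem_univ _, p.1.2⟩) a b

section PartialDerivatives

variable {f : ℝ → ℝ → ℝ} {T : Set ℝ} {x t : ℝ}

lemma hasDerivAt_slice_left (hf : DifferentiableOn ℝ (uncurry f) (univ ×ˢ T)) (ht : t ∈ T) :
    HasDerivAt (fun y => f y t) (fderivWithin ℝ (uncurry f) (univ ×ˢ T) (x, t) (1, 0)) x := by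
  have hline : HasDerivAt (fun y : ℝ => (y, t)) (1, 0) x :=
    (hasDerivAt_id x).prodMk (hasDerivAt_const x t)
  have hmaps : MapsTo (fun y : ℝ => (y, t)) univ (univ ×ˢ T) := fun y _ => ⟨mem_univ y, ht⟩
  exact hasDerivWithinAt_univ.mp <|
    HasFDerivWithinAt.comp_hasDerivWithinAt (l := uncurry f) x
      (hf (x, t) ⟨mem_univ x, ht⟩).hasFDerivWithinAt hline.hasDerivWithinAt hmaps

lemma hasDerivAt_pdx (hf : DifferentiableOn ℝ (uncurry f) (univ ×ˢ T)) (ht : t ∈ T) :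
    HasDerivAt (fun y => f y t) (pdx f x t) x :=
  (hasDerivAt_slice_left hf ht).differentiableAt.hasDerivAt

lemma hasDerivAt_pdt (hf : DifferentiableOn ℝ (uncurry f) (univ ×ˢ T)) (ht : T ∈ 𝓝 t) :
    HasDerivAt (f x) (pdt f x t) t := by
  have hxt : DifferentiableAt ℝ (uncurry f) (x, t) :=
    hf.differentiableAt (prod_mem_nhds univ_mem ht)
  exact (hxt.comp (f := fun s => (x, s)) t (by fun_prop)).hasDerivAt

-- The direction `(1, 0)` is tangent to `ℝ × T`, so smoothness holds up to the boundary of `T`.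
lemma contDiffOn_pdx {m n : WithTop ℕ∞} (hf : ContDiffOn ℝ n (uncurry f) (univ ×ˢ T))
    (hT : UniqueDiffOn ℝ T) (hmn : m + 1 ≤ n) :
    ContDiffOn ℝ m (uncurry (pdx f)) (univ ×ˢ T) := by
  have hfd : ContDiffOn ℝ m (fun p => fderivWithin ℝ (uncurry f) (univ ×ˢ T) p (1, 0))
      (univ ×ˢ T) :=
    (hf.fderivWithin (uniqueDiffOn_univ.prod hT) hmn).clm_apply contDiffOn_const
  have hn : n ≠ 0 := by
    rintro rfl
    simp at hmn
  exact hfd.congr fun p hp => (hasDerivAt_slice_left (hf.differentiableOn hn) hp.2).deriv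

lemma continuousOn_pdx (hf : ContDiffOn ℝ 1 (uncurry f) (univ ×ˢ T)) (hT : UniqueDiffOn ℝ T) :
    ContinuousOn (uncurry (pdx f)) (univ ×ˢ T) :=
  (contDiffOn_pdx hf hT (zero_add 1).le).continuousOn

end PartialDerivatives

section Cutoff

variable {k : ℤ} {x : ℝ}

lemma Dcut_of_le (hx : x ≤ k + 1) : Dcut k x = 1 := if_pos hx

lemma Dcut_of_mem_Icc (hx : x ∈ Icc ((k : ℝ) + 1) (k + 2)) : Dcut k x = k + 2 - x := by
  rcases hx.1.eq_or_lt with rfl | hlt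
  · rw [Dcut_of_le le_rfl]
    ring
  · rw [Dcut, if_neg hlt.not_ge, if_pos hx.2]

lemma Dcut_of_lt (hx : k + 2 < x) : Dcut k x = 0 := by
  rw [Dcut, if_neg (by linarith), if_neg hx.not_ge]

lemma Dcut_eq_max_min (k : ℤ) : Dcut k = fun x => max 0 (min 1 ((k : ℝ) + 2 - x)) := by
  grind [Dcut]

lemma continuous_Dcut (k : ℤ) : Continuous (Dcut k) := by
  rw [Dcut_eq_max_min]
  fun_prop

lemma integral_Ioi_mul_Dcut (hx : x ≤ k + 2) (g : ℝ → ℝ) :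
    ∫ y in Ioi x, g y * Dcut k y = ∫ y in x..(k + 2), g y * Dcut k y := by
  rw [intervalIntegral.integral_of_le hx]
  refine setIntegral_eq_of_subset_of_forall_sdiff_eq_zero measurableSet_Ioi
    Ioc_subset_Ioi_self fun y ⟨hxy, hy⟩ => ?_
  rw [Dcut_of_lt (not_le.mp fun hle => hy ⟨hxy, hle⟩), mul_zero]

lemma integral_deriv_mul_Dcut_right {g g' : ℝ → ℝ} (hg : ∀ y, HasDerivAt g (g' y) y)
    (hg' : Continuous g') :
    ∫ y in (k + 1 : ℝ)..(k + 2), g' y * Dcut k y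
      = (∫ y in (k + 1 : ℝ)..(k + 2), g y) - g (k + 1) :=
  calc ∫ y in (k + 1 : ℝ)..(k + 2), g' y * Dcut k y
      = ∫ y in (k + 1 : ℝ)..(k + 2), (k + 2 - y) * g' y := by
        refine intervalIntegral.integral_congr fun y hy => ?_
        rw [uIcc_of_le (by linarith)] at hy
        simp only [Dcut_of_mem_Icc hy, mul_comm]
    _ = (k + 2 - (k + 2)) * g (k + 2) - (k + 2 - (k + 1)) * g (k + 1)
          - ∫ y in (k + 1 : ℝ)..(k + 2), -1 * g y :=
        intervalIntegral.integral_mul_deriv_eq_deriv_mul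
          (fun y _ => (hasDerivAt_id y).const_sub (k + 2 : ℝ)) (fun y _ => hg y)
          intervalIntegrable_const (hg'.intervalIntegrable _ _)
    _ = (∫ y in (k + 1 : ℝ)..(k + 2), g y) - g (k + 1) := by
        rw [intervalIntegral.integral_const_mul]
        ring

lemma integral_deriv_mul_Dcut (hx : x ≤ k + 1) {g g' : ℝ → ℝ} (hg : ∀ y, HasDerivAt g (g' y) y)
    (hg' : Continuous g') :
    ∫ y in x..(k + 2), g' y * Dcut k y = (∫ y in (k + 1 : ℝ)..(k + 2), g y) - g x := by
  have hint : ∀ a b, IntervalIntegrable (fun y => g' y * Dcut k y) volume a b := fun a b =>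
    (hg'.mul (continuous_Dcut k)).intervalIntegrable a b
  have hleft : ∫ y in x..(k + 1), g' y * Dcut k y = g (k + 1) - g x := by
    rw [← intervalIntegral.integral_eq_sub_of_hasDerivAt (fun y _ => hg y)
      (hg'.intervalIntegrable _ _)]
    refine intervalIntegral.integral_congr fun y hy => ?_
    rw [uIcc_of_le hx] at hy
    simp only [Dcut_of_le hy.2, mul_one]
  rw [← intervalIntegral.integral_add_adjacent_intervals (hint x (k + 1)) (hint _ _), hleft,
    integral_deriv_mul_Dcut_right hg hg']
  ring

end Cutoff

section Momentum

variable {u σ : ℝ → ℝ → ℝ} {x t : ℝ}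

lemma sub_eq_integral_pdx (hu : DifferentiableOn ℝ (uncurry u) (univ ×ˢ Ici 0))
    (hσ : ContDiffOn ℝ 1 (uncurry σ) (univ ×ˢ Ici 0))
    (huσ : ∀ s, 0 < s → pdt u x s = pdx σ x s) (ht : 0 ≤ t) :
    u x t - u x 0 = ∫ s in (0 : ℝ)..t, pdx σ x s := by
  have hσx : ContinuousOn (pdx σ x) (Ici 0) :=
    (continuousOn_pdx hσ (uniqueDiffOn_Ici 0)).uncurry_left x (mem_univ x)
  refine (intervalIntegral.integral_eq_sub_of_hasDerivAt_of_le ht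
    ((hu.continuousOn.uncurry_left x (mem_univ x)).mono Icc_subset_Ici_self) (fun s hs => ?_)
    ((hσx.mono Icc_subset_Ici_self).intervalIntegrable_of_Icc ht)).symm
  rw [← huσ s hs.1]
  exact hasDerivAt_pdt hu (Ici_mem_nhds hs.1)

lemma integral_integral_pdx_mul_Dcut {k : ℤ} (hσ : ContDiffOn ℝ 1 (uncurry σ) (univ ×ˢ Ici 0))
    (hx : x ≤ k + 1) (ht : 0 ≤ t) :
    ∫ y in x..(k + 2), ∫ s in (0 : ℝ)..t, pdx σ y s * Dcut k y
      = (∫ s in (0 : ℝ)..t, ∫ y in (k + 1 : ℝ)..(k + 2), σ y s) - ∫ s in (0 : ℝ)..t, σ x s := by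
  have hσx : ContinuousOn (uncurry (pdx σ)) (univ ×ˢ Ici 0) :=
    continuousOn_pdx hσ (uniqueDiffOn_Ici 0)
  have hcont : ContinuousOn (uncurry fun y s => pdx σ y s * Dcut k y) (univ ×ˢ Ici 0) :=
    hσx.mul ((continuous_Dcut k).comp continuous_fst).continuousOn
  have hint : IntegrableOn (uncurry fun y s => pdx σ y s * Dcut k y)
      (uIoc x (k + 2) ×ˢ uIoc 0 t) := by
    refine ((hcont.mono (prod_mono (subset_univ (uIcc x (k + 2)))
      (Icc_subset_Ici_self : Icc 0 t ⊆ Ici 0))).integrableOn_compact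
      (isCompact_uIcc.prod isCompact_Icc)).mono_set (prod_mono uIoc_subset_uIcc ?_)
    rw [uIoc_of_le ht]
    exact Ioc_subset_Icc_self
  rw [intervalIntegral_intervalIntegral_swap hint, ← intervalIntegral.integral_sub]
  · refine intervalIntegral.integral_congr fun s hs => ?_
    rw [uIcc_of_le ht] at hs
    exact integral_deriv_mul_Dcut hx
      (fun y => hasDerivAt_pdx (hσ.differentiableOn one_ne_zero) hs.1)
      (continuousOn_univ.mp (hσx.uncurry_right s hs.1))
  · exact ((continuousOn_intervalIntegral_of_uncurry hσ.continuousOn _ _).mono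
      Icc_subset_Ici_self).intervalIntegrable_of_Icc ht
  · exact ((hσ.continuousOn.uncurry_left x (mem_univ x)).mono
      Icc_subset_Ici_self).intervalIntegrable_of_Icc ht

lemma integral_Ioi_sub_mul_Dcut {k : ℤ} (hu : DifferentiableOn ℝ (uncurry u) (univ ×ˢ Ici 0))
    (hσ : ContDiffOn ℝ 1 (uncurry σ) (univ ×ˢ Ici 0))
    (huσ : ∀ y s, 0 < s → pdt u y s = pdx σ y s) (hx : x ≤ k + 1) (ht : 0 ≤ t) :
    ∫ y in Ioi x, (u y 0 - u y t) * Dcut k y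
      = (∫ s in (0 : ℝ)..t, σ x s) - ∫ s in (0 : ℝ)..t, ∫ y in (k + 1 : ℝ)..(k + 2), σ y s := by
  have hweight : ∀ y, (u y 0 - u y t) * Dcut k y
      = -∫ s in (0 : ℝ)..t, pdx σ y s * Dcut k y := fun y => by
    rw [intervalIntegral.integral_mul_const, ← sub_eq_integral_pdx hu hσ (huσ y) ht]
    ring
  rw [integral_Ioi_mul_Dcut (by linarith)]
  simp only [hweight]
  rw [intervalIntegral.integral_neg, integral_integral_pdx_mul_Dcut hσ hx ht, neg_sub]

end Momentum

section EffectiveFlux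

variable {μ R : ℝ} {v u θ : ℝ → ℝ → ℝ} {T : Set ℝ} {x t : ℝ}

lemma pdx_eq_sigmaNS_mul_add (hμ : μ ≠ 0) (hv : v x t ≠ 0) :
    pdx u x t = 1 / μ * sigmaNS μ R v u θ x t * v x t + R / μ * θ x t := by
  rw [sigmaNS]
  field_simp
  ring

lemma pdx_sigmaNS (hu : DifferentiableAt ℝ (fun y => pdx u y t / v y t) x)
    (hθ : DifferentiableAt ℝ (fun y => R * θ y t / v y t) x) :
    pdx (sigmaNS μ R v u θ) x t = μ * pdx (fun y s => pdx u y s / v y s) x t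
      - pdx (fun y s => R * θ y s / v y s) x t := by
  simp only [pdx, sigmaNS, mul_div_assoc] at hu hθ ⊢
  rw [deriv_fun_sub (hu.const_mul μ) hθ, deriv_const_mul _ hu]

section Regularity

variable {m n : WithTop ℕ∞}

lemma contDiffOn_pdx_div (hv : ContDiffOn ℝ m (uncurry v) (univ ×ˢ T))
    (hu : ContDiffOn ℝ n (uncurry u) (univ ×ˢ T)) (hv0 : ∀ x, ∀ t ∈ T, v x t ≠ 0)
    (hT : UniqueDiffOn ℝ T) (hmn : m + 1 ≤ n) :
    ContDiffOn ℝ m (uncurry fun x t => pdx u x t / v x t) (univ ×ˢ T) :=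
  (contDiffOn_pdx hu hT hmn).div hv fun p hp => hv0 p.1 p.2 hp.2

lemma contDiffOn_pressure (hv : ContDiffOn ℝ m (uncurry v) (univ ×ˢ T))
    (hθ : ContDiffOn ℝ m (uncurry θ) (univ ×ˢ T)) (hv0 : ∀ x, ∀ t ∈ T, v x t ≠ 0) :
    ContDiffOn ℝ m (uncurry fun x t => R * θ x t / v x t) (univ ×ˢ T) :=
  (contDiffOn_const.mul hθ).div hv fun p hp => hv0 p.1 p.2 hp.2

lemma contDiffOn_sigmaNS (hv : ContDiffOn ℝ m (uncurry v) (univ ×ˢ T))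
    (hu : ContDiffOn ℝ n (uncurry u) (univ ×ˢ T)) (hθ : ContDiffOn ℝ m (uncurry θ) (univ ×ˢ T))
    (hv0 : ∀ x, ∀ t ∈ T, v x t ≠ 0) (hT : UniqueDiffOn ℝ T) (hmn : m + 1 ≤ n) :
    ContDiffOn ℝ m (uncurry (sigmaNS μ R v u θ)) (univ ×ˢ T) :=
  ((contDiffOn_const.mul (contDiffOn_pdx hu hT hmn)).div hv fun p hp => hv0 p.1 p.2 hp.2).sub
    (contDiffOn_pressure hv hθ hv0)

end Regularity

lemma pdt_eq_pdx_sigmaNS (hv : ContDiffOn ℝ 1 (uncurry v) (univ ×ˢ T))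
    (hu : ContDiffOn ℝ 2 (uncurry u) (univ ×ˢ T)) (hθ : ContDiffOn ℝ 1 (uncurry θ) (univ ×ˢ T))
    (hv0 : ∀ x, ∀ t ∈ T, v x t ≠ 0) (hT : UniqueDiffOn ℝ T) (ht : t ∈ T)
    (hmomentum : pdt u x t + pdx (fun y s => R * θ y s / v y s) x t
      = μ * pdx (fun y s => pdx u y s / v y s) x t) :
    pdt u x t = pdx (sigmaNS μ R v u θ) x t := by
  have hux : DifferentiableOn ℝ (uncurry fun x t => pdx u x t / v x t) (univ ×ˢ T) :=
    (contDiffOn_pdx_div hv hu hv0 hT one_add_one_eq_two.le).differentiableOn one_ne_zero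
  have hp : DifferentiableOn ℝ (uncurry fun x t => R * θ x t / v x t) (univ ×ˢ T) :=
    (contDiffOn_pressure hv hθ hv0).differentiableOn one_ne_zero
  rw [pdx_sigmaNS (hasDerivAt_pdx hux ht).differentiableAt (hasDerivAt_pdx hp ht).differentiableAt]
  exact eq_sub_of_add_eq hmomentum

end EffectiveFlux

section Representation

variable {μ R : ℝ} {v u θ : ℝ → ℝ → ℝ} {k : ℤ} {x s t : ℝ}

lemma Bfun_mul_Yfun (hu : DifferentiableOn ℝ (uncurry u) (univ ×ˢ Ici 0))
    (hσ : ContDiffOn ℝ 1 (uncurry (sigmaNS μ R v u θ)) (univ ×ˢ Ici 0))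
    (huσ : ∀ y s, 0 < s → pdt u y s = pdx (sigmaNS μ R v u θ) y s) (hx : x ≤ k + 1)
    (ht : 0 ≤ t) :
    Bfun μ v u k x t * Yfun μ R v u θ k t
      = v x 0 * exp (∫ s in (0 : ℝ)..t, 1 / μ * sigmaNS μ R v u θ x s) := by
  rw [Bfun, Yfun, integral_Ioi_sub_mul_Dcut hu hσ huσ hx ht, mul_assoc, ← exp_add, ← mul_add,
    sub_add_cancel, intervalIntegral.integral_const_mul]

lemma Bfun_mul_Yfun_div (hu : DifferentiableOn ℝ (uncurry u) (univ ×ˢ Ici 0))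
    (hσ : ContDiffOn ℝ 1 (uncurry (sigmaNS μ R v u θ)) (univ ×ˢ Ici 0))
    (huσ : ∀ y s, 0 < s → pdt u y s = pdx (sigmaNS μ R v u θ) y s) (hx : x ≤ k + 1)
    (hv0 : v x 0 ≠ 0) (hs : 0 ≤ s) (ht : 0 ≤ t) :
    Bfun μ v u k x t * Yfun μ R v u θ k t / (Bfun μ v u k x s * Yfun μ R v u θ k s)
      = exp (∫ r in s..t, 1 / μ * sigmaNS μ R v u θ x r) := by
  have hint : ∀ r, 0 ≤ r →
      IntervalIntegrable (fun r => 1 / μ * sigmaNS μ R v u θ x r) volume 0 r := fun r hr =>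
    (continuousOn_const.mul ((hσ.continuousOn.uncurry_left x (mem_univ x)).mono
      Icc_subset_Ici_self)).intervalIntegrable_of_Icc hr
  rw [Bfun_mul_Yfun hu hσ huσ hx hs, Bfun_mul_Yfun hu hσ huσ hx ht, mul_div_mul_left _ _ hv0,
    ← exp_sub, intervalIntegral.integral_interval_sub_left (hint t ht) (hint s hs)]

theorem stmt11_general (hμ : μ ≠ 0)
    (hv : ContDiffOn ℝ 1 (uncurry v) (univ ×ˢ Ici 0))
    (hu : ContDiffOn ℝ 2 (uncurry u) (univ ×ˢ Ici 0))
    (hθ : ContDiffOn ℝ 1 (uncurry θ) (univ ×ˢ Ici 0))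
    (hv0 : ∀ x t, 0 ≤ t → v x t ≠ 0)
    (hmass : ∀ x t, 0 < t → pdt v x t = pdx u x t)
    (hmomentum : ∀ x t, 0 < t → pdt u x t + pdx (fun y s => R * θ y s / v y s) x t
      = μ * pdx (fun y s => pdx u y s / v y s) x t)
    (hx : x ≤ k + 1) (ht : 0 ≤ t) :
    v x t = Bfun μ v u k x t * Yfun μ R v u θ k t
      + (R / μ) * ∫ s in (0 : ℝ)..t,
          (Bfun μ v u k x t * Yfun μ R v u θ k t)
            / (Bfun μ v u k x s * Yfun μ R v u θ k s) * θ x s := by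
  have hσ : ContDiffOn ℝ 1 (uncurry (sigmaNS μ R v u θ)) (univ ×ˢ Ici 0) :=
    contDiffOn_sigmaNS hv hu hθ hv0 (uniqueDiffOn_Ici 0) one_add_one_eq_two.le
  have huσ : ∀ y s, 0 < s → pdt u y s = pdx (sigmaNS μ R v u θ) y s := fun y s hs =>
    pdt_eq_pdx_sigmaNS hv hu hθ hv0 (uniqueDiffOn_Ici 0) hs.le (hmomentum y s hs)
  have hu' : DifferentiableOn ℝ (uncurry u) (univ ×ˢ Ici 0) := hu.differentiableOn two_ne_zero
  have hslice : ∀ {f : ℝ → ℝ → ℝ}, ContDiffOn ℝ 1 (uncurry f) (univ ×ˢ Ici 0) →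
      ContinuousOn (f x) (Icc 0 t) := fun hf =>
    (hf.continuousOn.uncurry_left x (mem_univ x)).mono Icc_subset_Ici_self
  have hode : ∀ s ∈ Ioo 0 t, HasDerivAt (v x)
      ((1 / μ * sigmaNS μ R v u θ x s) • v x s + R / μ * θ x s) s := fun s hs => by
    rw [smul_eq_mul, ← pdx_eq_sigmaNS_mul_add hμ (hv0 x s hs.1.le), ← hmass x s hs.1]
    exact hasDerivAt_pdt (hv.differentiableOn one_ne_zero) (Ici_mem_nhds hs.1)
  have hduhamel : v x t = exp (∫ r in (0 : ℝ)..t, 1 / μ * sigmaNS μ R v u θ x r) * v x 0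
      + ∫ s in (0 : ℝ)..t, exp (∫ r in s..t, 1 / μ * sigmaNS μ R v u θ x r) * (R / μ * θ x s) :=
    variation_of_constants ht (continuousOn_const.mul (hslice hσ))
      (continuousOn_const.mul (hslice hθ)) (hslice hv) hode
  rw [hduhamel, mul_comm (exp _), ← Bfun_mul_Yfun hu' hσ huσ hx ht,
    ← intervalIntegral.integral_const_mul]
  congr 1
  refine intervalIntegral.integral_congr fun s hs => ?_
  rw [uIcc_of_le ht] at hs
  simp only [Bfun_mul_Yfun_div hu' hσ huσ hx (hv0 x 0 le_rfl) hs.1 ht, mul_left_comm]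

end Representation

/-- Kazhikhov-type representation formula: for a smooth positive
solution of the Navier–Stokes system, for every `k ∈ ℤ`, `x ∈ [k,k+1]` and `t ≥ 0`,
`v(x,t) = B(x,t)Y(t) + (R/μ̃) ∫₀^t (B(x,t)Y(t))/(B(x,s)Y(s)) θ(x,s) ds`. -/
theorem stmt11
    (μ κ R cν β : ℝ)
    (hμ : 0 < μ) (hκ : 0 < κ) (hR : 0 < R) (hcν : 0 < cν) (hβ : 0 < β)
    (v u θ : ℝ → ℝ → ℝ)
    (hsmooth : ContDiffOn ℝ (⊤ : ℕ∞)
      (fun p : ℝ × ℝ => (v p.1 p.2, u p.1 p.2, θ p.1 p.2)) (univ ×ˢ Ici 0))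
    (hvpos : ∀ x t : ℝ, 0 ≤ t → 0 < v x t)
    (hθpos : ∀ x t : ℝ, 0 ≤ t → 0 < θ x t)
    (hNS : NSAll μ κ R cν β v u θ) :
    ∀ (k : ℤ) (x : ℝ), x ∈ Icc (k : ℝ) ((k : ℝ) + 1) → ∀ t : ℝ, 0 ≤ t →
      v x t = Bfun μ v u k x t * Yfun μ R v u θ k t
        + (R / μ) * ∫ s in (0 : ℝ)..t,
            (Bfun μ v u k x t * Yfun μ R v u θ k t)
              / (Bfun μ v u k x s * Yfun μ R v u θ k s) * θ x s := by
  intro k x hx t ht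
  exact stmt11_general hμ.ne' (contDiffOn_infty.mp hsmooth.fst 1)
    (contDiffOn_infty.mp hsmooth.snd.fst 2) (contDiffOn_infty.mp hsmooth.snd.snd 1)
    (fun y s hs => (hvpos y s hs).ne') (fun y s hs => (hNS y s hs).1)
    (fun y s hs => (hNS y s hs).2.1) hx.2 ht
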